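/- arXiv:2105.05413 — 6 statements merged into one kernel-verified Lean document; each statement's English description precedes it below -/
import Mathlib

section
/- Let u⁰,u¹,…,uⁿ ∈ V be an implicit Euler Galerkin solution in V for the form a, time step Δt > 0 and data f¹,…,fⁿ. Then for every j = 1,…,n one has ‖u^j‖ + √(κ_min/Q)·Δt·p(u^j) ≤ ‖u^{j−1}‖ + Δt·‖f^j‖. -/
open RealInnerProductSpace Finset

/-!
Testing the scheme with `v = u^j` and bounding both inner products with `u^j` by Cauchy–Schwarz
gives `(‖u^j‖ - ‖u^{j-1}‖) ‖u^j‖ + Δt a(u^j, u^j) ≤ Δt ‖f^j‖ ‖u^j‖`. The two lower bounds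
`κ_min p(u^j)² ≤ a(u^j, u^j)` and `‖u^j‖² / Q ≤ a(u^j, u^j)` are combined through their geometric
mean, `√(κ_min / Q) p(u^j) ‖u^j‖ ≤ a(u^j, u^j)`, so that every term carries a factor `‖u^j‖`,
which cancels.
-/

lemma sqrt_div_mul_mul_le {κ Q x y α : ℝ} (hκ : 0 ≤ κ) (hQ : 0 < Q) (hx : κ * x ^ 2 ≤ α)
    (hy : y ^ 2 ≤ Q * α) : √(κ / Q) * x * y ≤ α := by
  have hx' : (√κ * x) ^ 2 ≤ α := by rwa [mul_pow, Real.sq_sqrt hκ]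
  have hy' : (y / √Q) ^ 2 ≤ α := by rwa [div_pow, Real.sq_sqrt hQ.le, div_le_iff₀' hQ]
  calc √(κ / Q) * x * y = √κ * x * (y / √Q) := by rw [Real.sqrt_div hκ]; ring
    _ ≤ α := by linarith [two_mul_le_add_sq (√κ * x) (y / √Q)]

section ImplicitEuler

variable {𝕜 E : Type*} [RCLike 𝕜]

section Seminormed

variable [SeminormedAddCommGroup E] [InnerProductSpace 𝕜 E]

lemma norm_sub_norm_mul_norm_le_re_inner_sub_left (u w : E) :
    (‖u‖ - ‖w‖) * ‖u‖ ≤ RCLike.re (inner 𝕜 (u - w) u) := by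
  rw [inner_sub_left, map_sub, inner_self_eq_norm_mul_norm, sub_mul]
  exact sub_le_sub_left (re_inner_le_norm w u) _

/-- One step `w ↦ u` of the implicit Euler Galerkin scheme in `V` with step size `τ` and data `g`.
Neither linearity of `a` nor a vector space structure on `V` is built in, so the notion also covers
quasilinear problems; over `ℂ` the test vector `v` enters through the linear slot of the inner
product. -/
def IsImplicitEulerStep (a : E → E → 𝕜) (V : Set E) (τ : ℝ) (g w u : E) : Prop :=
  u ∈ V ∧ ∀ v ∈ V, inner 𝕜 (u - w) v + τ • a u v = τ • inner 𝕜 g v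

lemma IsImplicitEulerStep.energy_le {a : E → E → 𝕜} {V : Set E} {τ : ℝ} {g w u : E}
    (h : IsImplicitEulerStep a V τ g w u) (hτ : 0 ≤ τ) :
    (‖u‖ - ‖w‖) * ‖u‖ + τ * RCLike.re (a u u) ≤ τ * (‖g‖ * ‖u‖) :=
  calc (‖u‖ - ‖w‖) * ‖u‖ + τ * RCLike.re (a u u)
      ≤ RCLike.re (inner 𝕜 (u - w) u) + τ * RCLike.re (a u u) := by
        gcongr
        exact norm_sub_norm_mul_norm_le_re_inner_sub_left u w
    _ = τ * RCLike.re (inner 𝕜 g u) := by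
        simpa only [map_add, RCLike.smul_re] using congrArg RCLike.re (h.2 u h.1)
    _ ≤ τ * (‖g‖ * ‖u‖) := by
        gcongr
        exact re_inner_le_norm g u

end Seminormed

theorem implicit_euler_one_step_stability_general
    [NormedAddCommGroup E] [InnerProductSpace 𝕜 E] {a : E → E → 𝕜} {V : Set E}
    {Q : ℝ} (hQ : 0 < Q) (hpoin : ∀ v ∈ V, ‖v‖ ^ 2 ≤ Q * RCLike.re (a v v))
    {p : E → ℝ} (hp : p 0 = 0)
    {κ : ℝ} (hκ : 0 ≤ κ) (hκp : ∀ v ∈ V, κ * p v ^ 2 ≤ RCLike.re (a v v))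
    {τ : ℝ} (hτ : 0 ≤ τ) {g w u : E} (h : IsImplicitEulerStep a V τ g w u) :
    ‖u‖ + √(κ / Q) * τ * p u ≤ ‖w‖ + τ * ‖g‖ := by
  rcases eq_or_ne u 0 with rfl | hu
  · rw [norm_zero, hp, mul_zero, add_zero]
    positivity
  · have hcoercive : √(κ / Q) * p u * ‖u‖ ≤ RCLike.re (a u u) :=
      sqrt_div_mul_mul_le hκ hQ (hκp u h.1) (hpoin u h.1)
    refine le_of_mul_le_mul_right ?_ (norm_pos_iff.mpr hu)
    linarith [h.energy_le hτ, mul_le_mul_of_nonneg_left hcoercive hτ]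

end ImplicitEuler

/-- One-step stability estimate for the implicit Euler Galerkin scheme:
`‖u^j‖ + √(κ_min/Q)·Δt·p(u^j) ≤ ‖u^{j−1}‖ + Δt·‖f^j‖` for `j = 1,…,n`. -/
theorem implicit_euler_one_step_stability
    {E : Type*} [NormedAddCommGroup E] [InnerProductSpace ℝ E]
    (a : E →ₗ[ℝ] E →ₗ[ℝ] ℝ)
    (hsymm : ∀ u v : E, a u v = a v u)
    (hpsd : ∀ v : E, 0 ≤ a v v)
    (Q : ℝ) (hQ : 0 < Q)
    (hpoin : ∀ v : E, ‖v‖ ^ 2 ≤ Q * a v v)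
    (p : Seminorm ℝ E)
    (κmin : ℝ) (hκ : 0 < κmin)
    (hκp : ∀ v : E, κmin * (p v) ^ 2 ≤ a v v)
    (V : Submodule ℝ E)
    (n : ℕ) (u f : ℕ → E) (Δt : ℝ) (hΔt : 0 < Δt)
    (humem : ∀ j ≤ n, u j ∈ V)
    (hscheme : ∀ j, 1 ≤ j → j ≤ n → ∀ v ∈ V,
      ⟪u j - u (j - 1), v⟫ + Δt * a (u j) v = Δt * ⟪f j, v⟫) :
    ∀ j, 1 ≤ j → j ≤ n →
      ‖u j‖ + Real.sqrt (κmin / Q) * Δt * p (u j) ≤ ‖u (j - 1)‖ + Δt * ‖f j‖ := fun j hj hjn ↦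
  implicit_euler_one_step_stability_general (𝕜 := ℝ) (a := fun v w ↦ a v w) hQ (fun v _ ↦ hpoin v)
    (map_zero p) hκ.le (fun v _ ↦ hκp v) hΔt.le ⟨humem j hjn, hscheme j hj hjn⟩
end

section
/- (Stability of the implicit Euler Galerkin scheme.) Let u⁰,u¹,…,uⁿ ∈ V be an implicit Euler Galerkin solution in V for the form a, time step Δt > 0 and data f¹,…,fⁿ. Then ‖uⁿ‖ + √(κ_min/Q)·Δt·Σ_{j=1}^{n} p(u^j) ≤ ‖u⁰‖ + Δt·Σ_{j=1}^{n} ‖f^j‖. -/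
open RealInnerProductSpace Finset

/-!
Test the `j`-th equation with `v = u j`. By Cauchy–Schwarz,
`‖u j‖² + Δt * a (u j) (u j) ≤ (‖u (j - 1)‖ + Δt * ‖f j‖) * ‖u j‖`. The Poincaré inequality
and the bound of `p` by the energy together give `√(κmin / Q) * p v * ‖v‖ ≤ a v v`, so that one
factor `‖u j‖` cancels, and the resulting one-step bounds telescope.
-/

theorem add_sum_Icc_le_add_sum_Icc_of_step {M : Type*} [AddCommMonoid M] [PartialOrder M]
    [IsOrderedAddMonoid M] {n : ℕ} {x d g : ℕ → M}
    (hstep : ∀ j ∈ Icc 1 n, x j + d j ≤ x (j - 1) + g j) :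
    x n + ∑ j ∈ Icc 1 n, d j ≤ x 0 + ∑ j ∈ Icc 1 n, g j := by
  induction n with
  | zero => simp
  | succ n ih =>
    have hprev : x n + ∑ j ∈ Icc 1 n, d j ≤ x 0 + ∑ j ∈ Icc 1 n, g j :=
      ih fun j hj ↦ hstep j (Icc_subset_Icc_right n.le_succ hj)
    have hlast : x (n + 1) + d (n + 1) ≤ x n + g (n + 1) :=
      hstep (n + 1) (right_mem_Icc.mpr n.succ_pos)
    rw [sum_Icc_succ_top n.succ_pos, sum_Icc_succ_top n.succ_pos]
    calc x (n + 1) + (∑ j ∈ Icc 1 n, d j + d (n + 1))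
        = x (n + 1) + d (n + 1) + ∑ j ∈ Icc 1 n, d j := by abel
      _ ≤ x n + g (n + 1) + ∑ j ∈ Icc 1 n, d j := by gcongr
      _ = x n + ∑ j ∈ Icc 1 n, d j + g (n + 1) := by abel
      _ ≤ x 0 + ∑ j ∈ Icc 1 n, g j + g (n + 1) := by gcongr
      _ = x 0 + (∑ j ∈ Icc 1 n, g j + g (n + 1)) := by abel

theorem sqrt_div_mul_mul_le_of_sq_le {κ Q r s e : ℝ} (hκ : 0 ≤ κ) (hQ : 0 < Q)
    (hr : κ * r ^ 2 ≤ e) (hs : s ^ 2 ≤ Q * e) : √(κ / Q) * r * s ≤ e := by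
  have hr' : (√κ * r) ^ 2 ≤ e := by rwa [mul_pow, Real.sq_sqrt hκ]
  have hs' : (s / √Q) ^ 2 ≤ e := by rwa [div_pow, Real.sq_sqrt hQ.le, div_le_iff₀' hQ]
  calc √(κ / Q) * r * s = √κ * r * (s / √Q) := by rw [Real.sqrt_div hκ]; ring
    _ ≤ e := by linarith [two_mul_le_add_sq (√κ * r) (s / √Q)]

section ImplicitEulerStep

variable {E : Type*} [SeminormedAddCommGroup E] [InnerProductSpace ℝ E]
  {u u₀ f : E} {τ e : ℝ}

theorem norm_sq_add_mul_le_of_implicit_euler_step (hτ : 0 ≤ τ)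
    (hstep : ⟪u - u₀, u⟫ + τ * e ≤ τ * ⟪f, u⟫) :
    ‖u‖ ^ 2 + τ * e ≤ (‖u₀‖ + τ * ‖f‖) * ‖u‖ := by
  rw [inner_sub_left, real_inner_self_eq_norm_sq] at hstep
  calc ‖u‖ ^ 2 + τ * e ≤ ⟪u₀, u⟫ + τ * ⟪f, u⟫ := by linarith
    _ ≤ ‖u₀‖ * ‖u‖ + τ * (‖f‖ * ‖u‖) := by gcongr <;> exact real_inner_le_norm _ _
    _ = (‖u₀‖ + τ * ‖f‖) * ‖u‖ := by ring

theorem norm_add_sqrt_mul_le_of_implicit_euler_step {κ Q r : ℝ} (hκ : 0 < κ) (hQ : 0 < Q)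
    (hτ : 0 < τ) (hr : κ * r ^ 2 ≤ e) (hu : ‖u‖ ^ 2 ≤ Q * e)
    (hstep : ⟪u - u₀, u⟫ + τ * e ≤ τ * ⟪f, u⟫) :
    ‖u‖ + √(κ / Q) * (τ * r) ≤ ‖u₀‖ + τ * ‖f‖ := by
  have henergy := norm_sq_add_mul_le_of_implicit_euler_step hτ.le hstep
  rcases (norm_nonneg u).eq_or_lt' with hu_zero | hu_pos
  · have he : e ≤ 0 := nonpos_of_mul_nonpos_right (by simpa [hu_zero] using henergy) hτ
    have hr_zero : r = 0 :=
      sq_nonpos_iff r |>.mp <| nonpos_of_mul_nonpos_right (hr.trans he) hκ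
    rw [hu_zero, hr_zero, mul_zero, mul_zero, add_zero]
    positivity
  · refine le_of_mul_le_mul_right ?_ hu_pos
    calc (‖u‖ + √(κ / Q) * (τ * r)) * ‖u‖
        = ‖u‖ ^ 2 + τ * (√(κ / Q) * r * ‖u‖) := by ring
      _ ≤ ‖u‖ ^ 2 + τ * e := by gcongr; exact sqrt_div_mul_mul_le_of_sq_le hκ.le hQ hr hu
      _ ≤ (‖u₀‖ + τ * ‖f‖) * ‖u‖ := henergy

end ImplicitEulerStep

theorem implicit_euler_stability_general
    {E : Type*} [SeminormedAddCommGroup E] [InnerProductSpace ℝ E]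
    (V : Set E) (a : ℕ → E → E → ℝ)
    (Q : ℝ) (hQ : 0 < Q) (hpoin : ∀ j, ∀ v ∈ V, ‖v‖ ^ 2 ≤ Q * a j v v)
    (p : E → ℝ) (κmin : ℝ) (hκ : 0 < κmin)
    (hκp : ∀ j, ∀ v ∈ V, κmin * p v ^ 2 ≤ a j v v)
    (n : ℕ) (u f : ℕ → E) (Δt : ℕ → ℝ) (hΔt : ∀ j, 1 ≤ j → j ≤ n → 0 < Δt j)
    (humem : ∀ j, 1 ≤ j → j ≤ n → u j ∈ V)
    (hstep : ∀ j, 1 ≤ j → j ≤ n →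
      ⟪u j - u (j - 1), u j⟫ + Δt j * a j (u j) (u j) ≤ Δt j * ⟪f j, u j⟫) :
    ‖u n‖ + √(κmin / Q) * ∑ j ∈ Icc 1 n, Δt j * p (u j)
      ≤ ‖u 0‖ + ∑ j ∈ Icc 1 n, Δt j * ‖f j‖ := by
  rw [mul_sum]
  refine add_sum_Icc_le_add_sum_Icc_of_step (x := fun j ↦ ‖u j‖) fun j hj ↦ ?_
  obtain ⟨hj_one, hjn⟩ := mem_Icc.mp hj
  have huV : u j ∈ V := humem j hj_one hjn
  exact norm_add_sqrt_mul_le_of_implicit_euler_step hκ hQ (hΔt j hj_one hjn)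
    (hκp j _ huV) (hpoin j _ huV) (hstep j hj_one hjn)

/-- Stability of the implicit Euler Galerkin scheme:
`‖uⁿ‖ + √(κ_min/Q)·Δt·Σ_{j=1}^{n} p(u^j) ≤ ‖u⁰‖ + Δt·Σ_{j=1}^{n} ‖f^j‖`. -/
theorem implicit_euler_stability
    {E : Type*} [NormedAddCommGroup E] [InnerProductSpace ℝ E]
    (a : E →ₗ[ℝ] E →ₗ[ℝ] ℝ)
    (hsymm : ∀ u v : E, a u v = a v u)
    (hpsd : ∀ v : E, 0 ≤ a v v)
    (Q : ℝ) (hQ : 0 < Q)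
    (hpoin : ∀ v : E, ‖v‖ ^ 2 ≤ Q * a v v)
    (p : Seminorm ℝ E)
    (κmin : ℝ) (hκ : 0 < κmin)
    (hκp : ∀ v : E, κmin * (p v) ^ 2 ≤ a v v)
    (V : Submodule ℝ E)
    (n : ℕ) (u f : ℕ → E) (Δt : ℝ) (hΔt : 0 < Δt)
    (humem : ∀ j ≤ n, u j ∈ V)
    (hscheme : ∀ j, 1 ≤ j → j ≤ n → ∀ v ∈ V,
      ⟪u j - u (j - 1), v⟫ + Δt * a (u j) v = Δt * ⟪f j, v⟫) :
    ‖u n‖ + Real.sqrt (κmin / Q) * Δt * ∑ j ∈ Icc 1 n, p (u j)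
      ≤ ‖u 0‖ + Δt * ∑ j ∈ Icc 1 n, ‖f j‖ := by
  simpa only [← mul_sum, mul_assoc] using
    implicit_euler_stability_general V (fun _ v w ↦ a v w) Q hQ (fun _ v _ ↦ hpoin v)
      p κmin hκ (fun _ v _ ↦ hκp v) n u f (fun _ ↦ Δt) (fun _ _ _ ↦ hΔt) (fun j _ ↦ humem j)
      fun j hj_one hjn ↦ (hscheme j hj_one hjn (u j) (humem j hjn)).le
end

section
/- Let u⁰,…,uⁿ ∈ V be an implicit Euler Galerkin solution in V for the form a, and let w⁰,…,wⁿ ∈ V be an implicit Euler Galerkin solution in V for the form a′, both with the same time step Δt > 0 and the same data f¹,…,fⁿ. Set e^j = u^j − w^j. Then for every j = 1,…,n one has ‖e^j‖² ≤ ‖e^{j−1}‖² + (Δt/(2κ₁))·δ²·p(w^j)². -/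
open RealInnerProductSpace Finset

/-!
The error `e = u - w` of the two schemes is itself an implicit Euler step for `a`, with load
`a' w - a w`. Testing it with `e` gives `‖e‖² ≤ ‖e₀‖² + 2Δt ((a' w - a w) e - a e e)`; the load is
at most `δ p(w) p(e)`, and Young's inequality absorbs the factor `p(e)` into the coercivity of `a`.
-/

theorem mul_sub_mul_sq_le_sq_div {K : Type*} [Field K] [LinearOrder K] [IsStrictOrderedRing K]
    {κ : K} (hκ : 0 < κ) (b x : K) :
    b * x - κ * x ^ 2 ≤ b ^ 2 / (4 * κ) := by
  rw [le_div_iff₀ (by positivity)]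
  linarith [sq_nonneg (b - 2 * κ * x)]

section

variable {E : Type*} [SeminormedAddCommGroup E] [InnerProductSpace ℝ E]

theorem norm_sq_sub_norm_sq_le_two_mul_inner (x y : E) :
    ‖y‖ ^ 2 - ‖x‖ ^ 2 ≤ 2 * ⟪y - x, y⟫ := by
  have h : ‖y - x‖ ^ 2 = ‖y‖ ^ 2 - 2 * ⟪y, x⟫ + ‖x‖ ^ 2 := norm_sub_sq_real y x
  rw [inner_sub_left, real_inner_self_eq_norm_sq, real_inner_comm]
  linarith [sq_nonneg ‖y - x‖]

/-- One implicit Euler Galerkin step in `V` for the form `a`, from `x` to `y`, with time step `τ`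
and load `f`. The load is a functional, so that the difference of two forms at a fixed first
argument can serve as one; a datum `g : E` enters as `innerₗ E g`. Only the new value `y` is
required to lie in `V`. -/
structure IsImplicitEulerStep_s2 (V : Submodule ℝ E) (a : E →ₗ[ℝ] E →ₗ[ℝ] ℝ) (τ : ℝ)
    (f : Module.Dual ℝ E) (x y : E) : Prop where
  mem : y ∈ V
  eq : ∀ v ∈ V, ⟪y - x, v⟫ + τ * a y v = τ * f v

variable {V : Submodule ℝ E} {a a' : E →ₗ[ℝ] E →ₗ[ℝ] ℝ} {τ : ℝ} {f : Module.Dual ℝ E}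

namespace IsImplicitEulerStep_s2

theorem sub {u₀ u w₀ w : E} (hu : IsImplicitEulerStep_s2 V a τ f u₀ u)
    (hw : IsImplicitEulerStep_s2 V a' τ f w₀ w) :
    IsImplicitEulerStep_s2 V a τ (a' w - a w) (u₀ - w₀) (u - w) where
  mem := V.sub_mem hu.mem hw.mem
  eq v hv := by
    rw [sub_sub_sub_comm, inner_sub_left, map_sub, LinearMap.sub_apply, LinearMap.sub_apply]
    linarith [hu.eq v hv, hw.eq v hv]

theorem norm_sq_le_add_load_sub_energy {x y : E} (h : IsImplicitEulerStep_s2 V a τ f x y) :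
    ‖y‖ ^ 2 ≤ ‖x‖ ^ 2 + 2 * τ * (f y - a y y) := by
  linarith [h.eq y h.mem, norm_sq_sub_norm_sq_le_two_mul_inner x y]

theorem norm_sq_le_of_coercive {x y : E} (h : IsImplicitEulerStep_s2 V a τ f x y) (hτ : 0 ≤ τ)
    {p : E → ℝ} {κ M : ℝ} (hκ : 0 < κ) (hcoercive : ∀ v ∈ V, κ * p v ^ 2 ≤ a v v)
    (hload : ∀ v ∈ V, f v ≤ M * p v) :
    ‖y‖ ^ 2 ≤ ‖x‖ ^ 2 + τ / (2 * κ) * M ^ 2 := by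
  have absorb : f y - a y y ≤ M ^ 2 / (4 * κ) :=
    calc f y - a y y ≤ M * p y - κ * p y ^ 2 := sub_le_sub (hload y h.mem) (hcoercive y h.mem)
      _ ≤ M ^ 2 / (4 * κ) := mul_sub_mul_sq_le_sq_div hκ M (p y)
  calc ‖y‖ ^ 2 ≤ ‖x‖ ^ 2 + 2 * τ * (f y - a y y) := h.norm_sq_le_add_load_sub_energy
    _ ≤ ‖x‖ ^ 2 + 2 * τ * (M ^ 2 / (4 * κ)) := by gcongr
    _ = ‖x‖ ^ 2 + τ / (2 * κ) * M ^ 2 := by ring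

end IsImplicitEulerStep_s2

theorem implicit_euler_coefficient_perturbation_step_general {u₀ u w₀ w : E}
    (hu : IsImplicitEulerStep_s2 V a τ f u₀ u) (hw : IsImplicitEulerStep_s2 V a' τ f w₀ w)
    (hτ : 0 ≤ τ) {p : E → ℝ} {κ δ : ℝ} (hκ : 0 < κ)
    (hcoercive : ∀ v ∈ V, κ * p v ^ 2 ≤ a v v)
    (hpert : ∀ x ∈ V, ∀ v ∈ V, |a x v - a' x v| ≤ δ * p x * p v) :
    ‖u - w‖ ^ 2 ≤ ‖u₀ - w₀‖ ^ 2 + τ / (2 * κ) * δ ^ 2 * p w ^ 2 := by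
  have hload : ∀ v ∈ V, (a' w - a w) v ≤ δ * p w * p v := fun v hv =>
    calc a' w v - a w v ≤ |a w v - a' w v| := (le_abs_self _).trans_eq (abs_sub_comm _ _)
      _ ≤ δ * p w * p v := hpert w hw.mem v hv
  simpa only [mul_pow, ← mul_assoc] using
    (hu.sub hw).norm_sq_le_of_coercive hτ hκ hcoercive hload

end

/-- One-step perturbation estimate for two implicit Euler Galerkin solutions with
perturbed bilinear forms: `‖e^j‖² ≤ ‖e^{j−1}‖² + (Δt/(2κ₁))·δ²·p(w^j)²`. -/
theorem implicit_euler_coefficient_perturbation_step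
    {E : Type*} [NormedAddCommGroup E] [InnerProductSpace ℝ E]
    (a a' : E →ₗ[ℝ] E →ₗ[ℝ] ℝ)
    (hsymm : ∀ u v : E, a u v = a v u)
    (hsymm' : ∀ u v : E, a' u v = a' v u)
    (hpsd : ∀ v : E, 0 ≤ a v v)
    (hpsd' : ∀ v : E, 0 ≤ a' v v)
    (p : Seminorm ℝ E)
    (κ₁ κ₂ : ℝ) (hκ₁ : 0 < κ₁) (hκ₂ : 0 < κ₂)
    (hκ₁p : ∀ v : E, κ₁ * (p v) ^ 2 ≤ a v v)
    (hκ₂p : ∀ v : E, κ₂ * (p v) ^ 2 ≤ a' v v)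
    (δ : ℝ) (hδ : 0 ≤ δ)
    (hpert : ∀ u v : E, |a u v - a' u v| ≤ δ * p u * p v)
    (V : Submodule ℝ E)
    (n : ℕ) (u w f : ℕ → E) (Δt : ℝ) (hΔt : 0 < Δt)
    (humem : ∀ j ≤ n, u j ∈ V)
    (hwmem : ∀ j ≤ n, w j ∈ V)
    (hscheme : ∀ j, 1 ≤ j → j ≤ n → ∀ v ∈ V,
      ⟪u j - u (j - 1), v⟫ + Δt * a (u j) v = Δt * ⟪f j, v⟫)
    (hscheme' : ∀ j, 1 ≤ j → j ≤ n → ∀ v ∈ V,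
      ⟪w j - w (j - 1), v⟫ + Δt * a' (w j) v = Δt * ⟪f j, v⟫) :
    ∀ j, 1 ≤ j → j ≤ n →
      ‖u j - w j‖ ^ 2
        ≤ ‖u (j - 1) - w (j - 1)‖ ^ 2 + (Δt / (2 * κ₁)) * δ ^ 2 * (p (w j)) ^ 2 := by
  intro j hj hjn
  exact implicit_euler_coefficient_perturbation_step_general (f := innerₗ E (f j))
    ⟨humem j hjn, hscheme j hj hjn⟩ ⟨hwmem j hjn, hscheme' j hj hjn⟩ hΔt.le hκ₁
    (fun v _ => hκ₁p v) (fun x _ v _ => hpert x v)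
end

section
/- Let u⁰,…,uⁿ ∈ V be an implicit Euler Galerkin solution in V for the form a, and let w⁰,…,wⁿ ∈ V be an implicit Euler Galerkin solution in V for the form a′, both with the same time step Δt > 0 and the same data f¹,…,fⁿ, and assume u⁰ = w⁰. Then ‖uⁿ − wⁿ‖² ≤ (Δt·δ²/(2κ₁))·Σ_{j=1}^{n} p(w^j)². -/
open RealInnerProductSpace Finset

/-!
Subtracting the two schemes and testing with the error `e j = u j - w j` itself cancels the data:
`⟪e (j + 1) - e j, v⟫ = Δt * (a' (w (j + 1)) v - a (u (j + 1)) v)` with `v = e (j + 1)`. Splitting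
the right-hand side at `a (w (j + 1)) v`, strong monotonicity of `a` (coercivity, if `a` is
bilinear) produces the dissipation `-κ * p v ^ 2`, and Young's inequality lets it absorb the
perturbation `δ * p (w (j + 1)) * p v`. The left-hand side dominates half the increment of
`‖e j‖ ^ 2`, so the estimates telescope.
-/

section

variable {E : Type*} [SeminormedAddCommGroup E] [InnerProductSpace ℝ E]

theorem norm_sq_sub_norm_sq_le_two_mul_inner_sub (x y : E) :
    ‖x‖ ^ 2 - ‖y‖ ^ 2 ≤ 2 * ⟪x - y, x⟫ := by
  rw [inner_sub_left, real_inner_self_eq_norm_sq, real_inner_comm]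
  linarith [norm_sub_sq_real x y, sq_nonneg ‖x - y‖]

theorem norm_sq_le_add_sum_of_two_mul_inner_sub_le {e : ℕ → E} {c : ℕ → ℝ} {n : ℕ}
    (h : ∀ j < n, 2 * ⟪e (j + 1) - e j, e (j + 1)⟫ ≤ c (j + 1)) :
    ‖e n‖ ^ 2 ≤ ‖e 0‖ ^ 2 + ∑ j ∈ Icc 1 n, c j := by
  induction n with
  | zero => simp
  | succ n ih =>
    rw [sum_Icc_succ_top (Nat.le_add_left 1 n)]
    linarith [ih fun j hj => h j (hj.trans n.lt_succ_self), h n n.lt_succ_self,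
      norm_sq_sub_norm_sq_le_two_mul_inner_sub (e (n + 1)) (e n)]

/-- `u 0, …, u n` is an implicit Euler Galerkin solution in `V` with time step `τ`. To cover
nonlinear problems the form `a` is an arbitrary function of its two arguments; `F j` is the
functional `v ↦ ⟪f j, v⟫` when the data at time `j` is a vector `f j`. -/
structure IsImplicitEulerGalerkin (a : E → E → ℝ) (F : ℕ → E → ℝ) (V : AddSubgroup E) (τ : ℝ)
    (n : ℕ) (u : ℕ → E) : Prop where
  mem : ∀ j ≤ n, u j ∈ V
  step : ∀ j < n, ∀ v ∈ V, ⟪u (j + 1) - u j, v⟫ + τ * a (u (j + 1)) v = τ * F (j + 1) v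

namespace IsImplicitEulerGalerkin

variable {a a' : E → E → ℝ} {F : ℕ → E → ℝ} {V : AddSubgroup E} {τ : ℝ} {n : ℕ} {u w : ℕ → E}

theorem inner_error_increment_eq (hu : IsImplicitEulerGalerkin a F V τ n u)
    (hw : IsImplicitEulerGalerkin a' F V τ n w) {j : ℕ} (hj : j < n) {v : E} (hv : v ∈ V) :
    ⟪u (j + 1) - w (j + 1) - (u j - w j), v⟫ = τ * (a' (w (j + 1)) v - a (u (j + 1)) v) := by
  rw [sub_sub_sub_comm, inner_sub_left]
  linarith [hu.step j hj v hv, hw.step j hj v hv]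

theorem two_mul_inner_error_increment_le {p : E → ℝ} {κ δ : ℝ} (hκ : 0 < κ) (hτ : 0 ≤ τ)
    (hmono : ∀ x ∈ V, ∀ y ∈ V, κ * p (x - y) ^ 2 ≤ a x (x - y) - a y (x - y))
    (hpert : ∀ x ∈ V, ∀ v ∈ V, a' x v - a x v ≤ δ * p x * p v)
    (hu : IsImplicitEulerGalerkin a F V τ n u) (hw : IsImplicitEulerGalerkin a' F V τ n w)
    {j : ℕ} (hj : j < n) :
    2 * ⟪u (j + 1) - w (j + 1) - (u j - w j), u (j + 1) - w (j + 1)⟫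
      ≤ τ * δ ^ 2 / (2 * κ) * p (w (j + 1)) ^ 2 := by
  have hu_mem := hu.mem (j + 1) hj
  have hw_mem := hw.mem (j + 1) hj
  have he_mem := V.sub_mem hu_mem hw_mem
  rw [inner_error_increment_eq hu hw hj he_mem]
  set x := u (j + 1)
  set y := w (j + 1)
  have hyoung : 2 * p (x - y) * (δ * p y) ≤ 2 * κ * p (x - y) ^ 2 + (2 * κ)⁻¹ * (δ * p y) ^ 2 :=
    two_mul_le_add_mul_sq (by positivity)
  have hresidual : 2 * (a' y (x - y) - a x (x - y)) ≤ (2 * κ)⁻¹ * (δ * p y) ^ 2 := by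
    linarith [hpert y hw_mem _ he_mem, hmono x hu_mem y hw_mem]
  calc 2 * (τ * (a' y (x - y) - a x (x - y)))
      = τ * (2 * (a' y (x - y) - a x (x - y))) := mul_left_comm _ _ _
    _ ≤ τ * ((2 * κ)⁻¹ * (δ * p y) ^ 2) := by gcongr
    _ = τ * δ ^ 2 / (2 * κ) * p y ^ 2 := by ring

end IsImplicitEulerGalerkin

theorem implicit_euler_coefficient_perturbation_sum_general {a a' : E → E → ℝ} {F : ℕ → E → ℝ}
    {V : AddSubgroup E} {p : E → ℝ} {κ δ τ : ℝ} {n : ℕ} {u w : ℕ → E} (hκ : 0 < κ) (hτ : 0 ≤ τ)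
    (hmono : ∀ x ∈ V, ∀ y ∈ V, κ * p (x - y) ^ 2 ≤ a x (x - y) - a y (x - y))
    (hpert : ∀ x ∈ V, ∀ v ∈ V, a' x v - a x v ≤ δ * p x * p v)
    (hu : IsImplicitEulerGalerkin a F V τ n u) (hw : IsImplicitEulerGalerkin a' F V τ n w) :
    ‖u n - w n‖ ^ 2
      ≤ ‖u 0 - w 0‖ ^ 2 + τ * δ ^ 2 / (2 * κ) * ∑ j ∈ Icc 1 n, p (w j) ^ 2 := by
  rw [mul_sum]
  exact norm_sq_le_add_sum_of_two_mul_inner_sub_le (e := fun j => u j - w j) fun _ hj =>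
    IsImplicitEulerGalerkin.two_mul_inner_error_increment_le hκ hτ hmono hpert hu hw hj

end

/-- Accumulated perturbation estimate for two implicit Euler Galerkin solutions with
perturbed bilinear forms and equal initial data:
`‖uⁿ − wⁿ‖² ≤ (Δt·δ²/(2κ₁))·Σ_{j=1}^{n} p(w^j)²`. -/
theorem implicit_euler_coefficient_perturbation_sum
    {E : Type*} [NormedAddCommGroup E] [InnerProductSpace ℝ E]
    (a a' : E →ₗ[ℝ] E →ₗ[ℝ] ℝ)
    (hsymm : ∀ u v : E, a u v = a v u)
    (hsymm' : ∀ u v : E, a' u v = a' v u)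
    (hpsd : ∀ v : E, 0 ≤ a v v)
    (hpsd' : ∀ v : E, 0 ≤ a' v v)
    (p : Seminorm ℝ E)
    (κ₁ κ₂ : ℝ) (hκ₁ : 0 < κ₁) (hκ₂ : 0 < κ₂)
    (hκ₁p : ∀ v : E, κ₁ * (p v) ^ 2 ≤ a v v)
    (hκ₂p : ∀ v : E, κ₂ * (p v) ^ 2 ≤ a' v v)
    (δ : ℝ) (hδ : 0 ≤ δ)
    (hpert : ∀ u v : E, |a u v - a' u v| ≤ δ * p u * p v)
    (V : Submodule ℝ E)
    (n : ℕ) (u w f : ℕ → E) (Δt : ℝ) (hΔt : 0 < Δt)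
    (humem : ∀ j ≤ n, u j ∈ V)
    (hwmem : ∀ j ≤ n, w j ∈ V)
    (hscheme : ∀ j, 1 ≤ j → j ≤ n → ∀ v ∈ V,
      ⟪u j - u (j - 1), v⟫ + Δt * a (u j) v = Δt * ⟪f j, v⟫)
    (hscheme' : ∀ j, 1 ≤ j → j ≤ n → ∀ v ∈ V,
      ⟪w j - w (j - 1), v⟫ + Δt * a' (w j) v = Δt * ⟪f j, v⟫)
    (hinit : u 0 = w 0) :
    ‖u n - w n‖ ^ 2 ≤ (Δt * δ ^ 2 / (2 * κ₁)) * ∑ j ∈ Icc 1 n, (p (w j)) ^ 2 := by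
  have hmono (x y : E) : κ₁ * p (x - y) ^ 2 ≤ a x (x - y) - a y (x - y) := by
    rw [← LinearMap.sub_apply, ← map_sub]
    exact hκ₁p (x - y)
  have hpert' (x v : E) : a' x v - a x v ≤ δ * p x * p v :=
    sub_le_comm.mp (sub_le_of_abs_sub_le_left (hpert x v))
  have hu : IsImplicitEulerGalerkin (a · ·) (fun j v => ⟪f j, v⟫) V.toAddSubgroup Δt n u :=
    ⟨humem, fun j hj => hscheme (j + 1) (Nat.le_add_left 1 j) hj⟩
  have hw : IsImplicitEulerGalerkin (a' · ·) (fun j v => ⟪f j, v⟫) V.toAddSubgroup Δt n w :=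
    ⟨hwmem, fun j hj => hscheme' (j + 1) (Nat.le_add_left 1 j) hj⟩
  simpa [hinit] using implicit_euler_coefficient_perturbation_sum_general hκ₁ hΔt.le
    (fun x _ y _ => hmono x y) (fun x _ v _ => hpert' x v) hu hw
end

section
/- (Continuity of the fine-scale solution with respect to the coefficient; explicit form of the e₁ and e₄ estimates.) Assume in addition the Poincaré inequality ‖v‖² ≤ Q·a′(v,v) for all v ∈ E with a constant Q > 0. Let u⁰,…,uⁿ ∈ V be an implicit Euler Galerkin solution in V for the form a, and let w⁰,…,wⁿ ∈ V be an implicit Euler Galerkin solution in V for the form a′, both with the same time step Δt > 0 and the same data f¹,…,fⁿ, and assume u⁰ = w⁰. Then ‖uⁿ − wⁿ‖² ≤ δ²·Q·(‖w⁰‖ + Δt·Σ_{j=1}^{n}‖f^j‖)² / (2·κ₁·κ₂·Δt). -/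
open RealInnerProductSpace Finset

/-! With `e = u - w`, subtracting the two schemes and testing with `e` leaves the consistency
term `(a' - a)(w, e)`. Young's inequality splits it into `a(e, e)`, which the scheme for `u`
absorbs, and a multiple of `a'(w, w)`, so `‖uⁿ - wⁿ‖²` is at most a multiple of the energy
dissipated by `w`.

That energy is bounded by testing the scheme for `w` with `w` itself. Writing `x = ‖w^j‖`,
`m = ‖w^(j-1)‖ + Δt ‖f^j‖` and `B = Δt a'(w^j, w^j)`, this gives `x² + B ≤ m x`. If moreover
`a'(v, v) ≥ c ‖v‖²`, then `(2 + c Δt) B ≤ m² - x²`, which telescopes because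
`‖w^(j-1)‖ ≤ ‖w⁰‖ + Δt ∑_{i<j} ‖f^i‖`. The Poincaré inequality provides `c = 1 / Q`. -/

section RealInequalities

theorem mul_add_sq_le_sq_of_sq_add_le_mul {l B x m : ℝ} (hl : 0 ≤ l) (hx : 0 ≤ x)
    (henergy : x ^ 2 + B ≤ m * x) (hcoer : l * x ^ 2 ≤ B) :
    (2 + l) * B + x ^ 2 ≤ m ^ 2 := by
  have hB : (2 + l) * B ≤ (2 + l) * (x * (m - x)) := by
    gcongr
    linarith
  rcases hx.eq_or_lt with rfl | hx
  · linarith [sq_nonneg m]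
  have hgap : l * x ≤ m - x := le_of_mul_le_mul_right (by linarith) hx
  have hlx : 0 ≤ l * x := by positivity
  have hprod : 0 ≤ (m - x) * (m - x - l * x) := mul_nonneg (hlx.trans hgap) (sub_nonneg.2 hgap)
  linarith

theorem sum_add_sq_le_sq_add_sum {x s b : ℕ → ℝ} {n : ℕ}
    (hx : ∀ j, 0 ≤ x j) (hs : ∀ j, 0 ≤ s j) (hb : ∀ j, 0 ≤ b j)
    (hstep : ∀ j < n, b (j + 1) + x (j + 1) ^ 2 ≤ (x j + s (j + 1)) ^ 2) :
    ∑ j ∈ Icc 1 n, b j + x n ^ 2 ≤ (x 0 + ∑ j ∈ Icc 1 n, s j) ^ 2 := by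
  induction n with
  | zero => simp
  | succ n ih =>
    have ih := ih fun j hj => hstep j (hj.trans n.lt_succ_self)
    have hlast := hstep n n.lt_succ_self
    rw [sum_Icc_succ_top (by lia), sum_Icc_succ_top (by lia), ← add_assoc (x 0)]
    set M := x 0 + ∑ j ∈ Icc 1 n, s j
    have hM : 0 ≤ M := add_nonneg (hx 0) (sum_nonneg fun j _ => hs j)
    have hxM : x n ≤ M :=
      le_of_sq_le_sq (by linarith [sum_nonneg fun j (_ : j ∈ Icc 1 n) => hb j]) hM
    have hcross : s (n + 1) * x n ≤ s (n + 1) * M := mul_le_mul_of_nonneg_left hxM (hs _)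
    linarith

end RealInequalities

section ImplicitEuler

variable {E : Type*} [SeminormedAddCommGroup E] [InnerProductSpace ℝ E]

/-- One step `u₀ ↦ u₁` of the implicit Euler Galerkin scheme in the subspace `V` for the form
`a`, with time step `Δt` and datum `f`. Only the new value `u₁` has to lie in `V`. -/
structure IsImplicitEulerStep_s4 (a : LinearMap.BilinForm ℝ E) (V : Submodule ℝ E) (Δt : ℝ)
    (f u₀ u₁ : E) : Prop where
  mem : u₁ ∈ V
  scheme : ∀ v ∈ V, ⟪u₁ - u₀, v⟫ + Δt * a u₁ v = Δt * ⟪f, v⟫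

/-- `u⁰, …, uⁿ` is an implicit Euler Galerkin solution in `V` for the form `a`, with time step
`Δt` and data `f¹, …, fⁿ`. Values beyond index `n`, and `f⁰`, are irrelevant; steps are indexed by
`j < n` to avoid the truncated subtraction `j - 1`. -/
def IsImplicitEulerSolution (a : LinearMap.BilinForm ℝ E) (V : Submodule ℝ E) (Δt : ℝ)
    (n : ℕ) (f u : ℕ → E) : Prop :=
  ∀ j < n, IsImplicitEulerStep_s4 a V Δt (f (j + 1)) (u j) (u (j + 1))

variable {a a' : LinearMap.BilinForm ℝ E} {V : Submodule ℝ E} {Δt c C : ℝ}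

namespace IsImplicitEulerStep_s4

variable {f u₀ u₁ w₀ w₁ : E}

theorem norm_sq_add_le (h : IsImplicitEulerStep_s4 a V Δt f u₀ u₁) (hΔt : 0 ≤ Δt) :
    ‖u₁‖ ^ 2 + Δt * a u₁ u₁ ≤ (‖u₀‖ + Δt * ‖f‖) * ‖u₁‖ := by
  have htest := h.scheme u₁ h.mem
  rw [inner_sub_left, real_inner_self_eq_norm_sq] at htest
  calc ‖u₁‖ ^ 2 + Δt * a u₁ u₁ = ⟪u₀, u₁⟫ + Δt * ⟪f, u₁⟫ := by linarith
    _ ≤ ‖u₀‖ * ‖u₁‖ + Δt * (‖f‖ * ‖u₁‖) := by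
      gcongr <;> exact real_inner_le_norm _ _
    _ = (‖u₀‖ + Δt * ‖f‖) * ‖u₁‖ := by ring

theorem energy_add_norm_sq_le (h : IsImplicitEulerStep_s4 a V Δt f u₀ u₁) (hΔt : 0 ≤ Δt)
    (hc : 0 ≤ c) (hcoer : ∀ v, c * ‖v‖ ^ 2 ≤ a v v) :
    (2 + c * Δt) * (Δt * a u₁ u₁) + ‖u₁‖ ^ 2 ≤ (‖u₀‖ + Δt * ‖f‖) ^ 2 :=
  mul_add_sq_le_sq_of_sq_add_le_mul (by positivity) (norm_nonneg _) (h.norm_sq_add_le hΔt)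
    (by linarith [mul_le_mul_of_nonneg_left (hcoer u₁) hΔt])

theorem inner_sub_sub_eq (hu : IsImplicitEulerStep_s4 a V Δt f u₀ u₁)
    (hw : IsImplicitEulerStep_s4 a' V Δt f w₀ w₁) :
    ⟪(u₁ - w₁) - (u₀ - w₀), u₁ - w₁⟫ =
      Δt * (a' w₁ (u₁ - w₁) - a w₁ (u₁ - w₁) - a (u₁ - w₁) (u₁ - w₁)) := by
  have he : u₁ - w₁ ∈ V := V.sub_mem hu.mem hw.mem
  have hsplit : a (u₁ - w₁) (u₁ - w₁) = a u₁ (u₁ - w₁) - a w₁ (u₁ - w₁) := by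
    rw [map_sub a, LinearMap.sub_apply]
  rw [hsplit, sub_sub_sub_comm, inner_sub_left]
  linarith [hu.scheme _ he, hw.scheme _ he]

theorem norm_sub_sq_le (hu : IsImplicitEulerStep_s4 a V Δt f u₀ u₁)
    (hw : IsImplicitEulerStep_s4 a' V Δt f w₀ w₁) (hΔt : 0 ≤ Δt)
    (hpert : ∀ u v, a' u v - a u v ≤ a v v + C * a' u u) :
    ‖u₁ - w₁‖ ^ 2 ≤ ‖u₀ - w₀‖ ^ 2 + 2 * C * (Δt * a' w₁ w₁) := by
  have herror := hu.inner_sub_sub_eq hw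
  set e₀ := u₀ - w₀
  set e₁ := u₁ - w₁
  have hpolar : ‖e₁‖ ^ 2 - ‖e₀‖ ^ 2 ≤ 2 * ⟪e₁ - e₀, e₁⟫ := by
    rw [inner_sub_left, real_inner_self_eq_norm_sq, real_inner_comm]
    linarith [sq_nonneg ‖e₁ - e₀‖, norm_sub_sq_real e₁ e₀]
  linarith [mul_le_mul_of_nonneg_left (hpert w₁ e₁) hΔt]

end IsImplicitEulerStep_s4

namespace IsImplicitEulerSolution

variable {n : ℕ} {f u w : ℕ → E}

theorem sum_energy_le (h : IsImplicitEulerSolution a V Δt n f u) (hΔt : 0 ≤ Δt)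
    (hc : 0 ≤ c) (hcoer : ∀ v, c * ‖v‖ ^ 2 ≤ a v v) :
    (2 + c * Δt) * ∑ j ∈ Icc 1 n, Δt * a (u j) (u j) ≤
      (‖u 0‖ + Δt * ∑ j ∈ Icc 1 n, ‖f j‖) ^ 2 := by
  have hpos (v : E) : 0 ≤ a v v := (by positivity : 0 ≤ c * ‖v‖ ^ 2).trans (hcoer v)
  rw [mul_sum, mul_sum]
  refine (le_add_of_nonneg_right (sq_nonneg ‖u n‖)).trans
    (sum_add_sq_le_sq_add_sum (x := fun j => ‖u j‖) (fun _ => norm_nonneg _)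
      (fun _ => by positivity) (fun j => ?_)
      fun j hj => (h j hj).energy_add_norm_sq_le hΔt hc hcoer)
  have := hpos (u j)
  positivity

theorem norm_sub_sq_le (hu : IsImplicitEulerSolution a V Δt n f u)
    (hw : IsImplicitEulerSolution a' V Δt n f w) (hΔt : 0 ≤ Δt)
    (hpert : ∀ u v, a' u v - a u v ≤ a v v + C * a' u u) :
    ‖u n - w n‖ ^ 2 ≤ ‖u 0 - w 0‖ ^ 2 + 2 * C * ∑ j ∈ Icc 1 n, Δt * a' (w j) (w j) := by
  induction n with
  | zero => simp
  | succ n ih =>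
    have ih := ih (fun j hj => hu j (hj.trans n.lt_succ_self))
      fun j hj => hw j (hj.trans n.lt_succ_self)
    have hlast := (hu n n.lt_succ_self).norm_sub_sq_le (hw n n.lt_succ_self) hΔt hpert
    rw [sum_Icc_succ_top (by lia)]
    linarith

end IsImplicitEulerSolution

theorem sub_apply_le_of_abs_sub_le {p : E → ℝ} {κ₁ κ₂ δ : ℝ} (hκ₁ : 0 < κ₁) (hκ₂ : 0 < κ₂)
    (hκ₁p : ∀ v, κ₁ * p v ^ 2 ≤ a v v) (hκ₂p : ∀ v, κ₂ * p v ^ 2 ≤ a' v v)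
    (hpert : ∀ u v, |a u v - a' u v| ≤ δ * p u * p v) (u v : E) :
    a' u v - a u v ≤ a v v + δ ^ 2 / (4 * κ₁ * κ₂) * a' u u := by
  have hyoung : δ * p u * p v ≤ κ₁ * p v ^ 2 + δ ^ 2 / (4 * κ₁) * p u ^ 2 := by
    have hsq : κ₁ * p v ^ 2 + δ ^ 2 / (4 * κ₁) * p u ^ 2 - δ * p u * p v =
        (2 * κ₁ * p v - δ * p u) ^ 2 / (4 * κ₁) := by
      field_simp
      ring
    exact sub_nonneg.1 (hsq ▸ by positivity)
  calc a' u v - a u v ≤ δ * p u * p v := by linarith [(abs_le.1 (hpert u v)).1]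
    _ ≤ κ₁ * p v ^ 2 + δ ^ 2 / (4 * κ₁) * p u ^ 2 := hyoung
    _ = κ₁ * p v ^ 2 + δ ^ 2 / (4 * κ₁ * κ₂) * (κ₂ * p u ^ 2) := by field_simp
    _ ≤ a v v + δ ^ 2 / (4 * κ₁ * κ₂) * a' u u := by
      gcongr
      exacts [hκ₁p v, hκ₂p u]

theorem implicit_euler_coefficient_continuity_general {p : E → ℝ} {κ₁ κ₂ δ : ℝ}
    (hκ₁ : 0 < κ₁) (hκ₂ : 0 < κ₂)
    (hκ₁p : ∀ v, κ₁ * p v ^ 2 ≤ a v v) (hκ₂p : ∀ v, κ₂ * p v ^ 2 ≤ a' v v)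
    (hpert : ∀ u v, |a u v - a' u v| ≤ δ * p u * p v)
    (hc : 0 ≤ c) (hcoer : ∀ v, c * ‖v‖ ^ 2 ≤ a' v v)
    {n : ℕ} {f u w : ℕ → E} (hΔt : 0 ≤ Δt)
    (hu : IsImplicitEulerSolution a V Δt n f u) (hw : IsImplicitEulerSolution a' V Δt n f w)
    (hinit : u 0 = w 0) :
    ‖u n - w n‖ ^ 2 ≤
      δ ^ 2 * (‖w 0‖ + Δt * ∑ j ∈ Icc 1 n, ‖f j‖) ^ 2 / (2 * κ₁ * κ₂ * (2 + c * Δt)) := by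
  set S := ∑ j ∈ Icc 1 n, Δt * a' (w j) (w j)
  set M := ‖w 0‖ + Δt * ∑ j ∈ Icc 1 n, ‖f j‖
  have herror : ‖u n - w n‖ ^ 2 ≤ 2 * (δ ^ 2 / (4 * κ₁ * κ₂)) * S := by
    simpa [hinit] using
      hu.norm_sub_sq_le hw hΔt (sub_apply_le_of_abs_sub_le hκ₁ hκ₂ hκ₁p hκ₂p hpert)
  have henergy : S ≤ M ^ 2 / (2 + c * Δt) :=
    (le_div_iff₀' (by positivity)).2 (hw.sum_energy_le hΔt hc hcoer)
  calc ‖u n - w n‖ ^ 2 ≤ 2 * (δ ^ 2 / (4 * κ₁ * κ₂)) * S := herror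
    _ ≤ 2 * (δ ^ 2 / (4 * κ₁ * κ₂)) * (M ^ 2 / (2 + c * Δt)) := by gcongr
    _ = δ ^ 2 * M ^ 2 / (2 * κ₁ * κ₂ * (2 + c * Δt)) := by
      field_simp
      ring

end ImplicitEuler

/-- Continuity of the fine-scale solution with respect to the coefficient
(explicit form of the `e₁` and `e₄` estimates):
`‖uⁿ − wⁿ‖² ≤ δ²·Q·(‖w⁰‖ + Δt·Σ‖f^j‖)² / (2·κ₁·κ₂·Δt)`. -/
theorem implicit_euler_coefficient_continuity
    {E : Type*} [NormedAddCommGroup E] [InnerProductSpace ℝ E]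
    (a a' : E →ₗ[ℝ] E →ₗ[ℝ] ℝ)
    (hsymm : ∀ u v : E, a u v = a v u)
    (hsymm' : ∀ u v : E, a' u v = a' v u)
    (hpsd : ∀ v : E, 0 ≤ a v v)
    (hpsd' : ∀ v : E, 0 ≤ a' v v)
    (p : Seminorm ℝ E)
    (κ₁ κ₂ : ℝ) (hκ₁ : 0 < κ₁) (hκ₂ : 0 < κ₂)
    (hκ₁p : ∀ v : E, κ₁ * (p v) ^ 2 ≤ a v v)
    (hκ₂p : ∀ v : E, κ₂ * (p v) ^ 2 ≤ a' v v)
    (δ : ℝ) (hδ : 0 ≤ δ)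
    (hpert : ∀ u v : E, |a u v - a' u v| ≤ δ * p u * p v)
    (Q : ℝ) (hQ : 0 < Q)
    (hpoin' : ∀ v : E, ‖v‖ ^ 2 ≤ Q * a' v v)
    (V : Submodule ℝ E)
    (n : ℕ) (u w f : ℕ → E) (Δt : ℝ) (hΔt : 0 < Δt)
    (humem : ∀ j ≤ n, u j ∈ V)
    (hwmem : ∀ j ≤ n, w j ∈ V)
    (hscheme : ∀ j, 1 ≤ j → j ≤ n → ∀ v ∈ V,
      ⟪u j - u (j - 1), v⟫ + Δt * a (u j) v = Δt * ⟪f j, v⟫)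
    (hscheme' : ∀ j, 1 ≤ j → j ≤ n → ∀ v ∈ V,
      ⟪w j - w (j - 1), v⟫ + Δt * a' (w j) v = Δt * ⟪f j, v⟫)
    (hinit : u 0 = w 0) :
    ‖u n - w n‖ ^ 2
      ≤ δ ^ 2 * Q * (‖w 0‖ + Δt * ∑ j ∈ Icc 1 n, ‖f j‖) ^ 2 / (2 * κ₁ * κ₂ * Δt) := by
  set M := ‖w 0‖ + Δt * ∑ j ∈ Icc 1 n, ‖f j‖
  calc ‖u n - w n‖ ^ 2 ≤ δ ^ 2 * M ^ 2 / (2 * κ₁ * κ₂ * (2 + Q⁻¹ * Δt)) :=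
        implicit_euler_coefficient_continuity_general hκ₁ hκ₂ hκ₁p hκ₂p hpert
          (inv_nonneg.2 hQ.le) (fun v => (inv_mul_le_iff₀ hQ).2 (hpoin' v)) hΔt.le
          (fun j hj => ⟨humem _ hj, hscheme _ j.succ_pos hj⟩)
          (fun j hj => ⟨hwmem _ hj, hscheme' _ j.succ_pos hj⟩) hinit
    _ ≤ δ ^ 2 * M ^ 2 / (2 * κ₁ * κ₂ * (Q⁻¹ * Δt)) := by
      gcongr
      linarith
    _ = δ ^ 2 * Q * M ^ 2 / (2 * κ₁ * κ₂ * Δt) := by field_simp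
end

section
/- (Error between the fine-scale and the multiscale implicit Euler solutions; explicit form of the e₂ estimate.) Let u_h⁰,…,u_hⁿ ∈ V_h be an implicit Euler Galerkin solution in V_h and u_H⁰,…,u_Hⁿ ∈ V_ms an implicit Euler Galerkin solution in V_ms, both for the form a, the same time step Δt > 0 and the same data f¹,…,fⁿ. Set ρ^j = u_h^j − R_H u_h^j for j = 0,…,n. Then ‖u_hⁿ − u_Hⁿ‖ ≤ ‖ρⁿ‖ + ‖u_h⁰ − u_H⁰‖ + ‖ρ⁰‖ + Σ_{j=1}^{n} (‖ρ^j‖ + ‖ρ^{j−1}‖). -/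
open RealInnerProductSpace Finset

/-
Split the error as `u - U = ρ + θ` with `ρ = u - w` and `θ = w - U`, where `w` is the Ritz
projection of `u`. Since `a ρ v = 0` for every test vector `v`, `θ` solves the same implicit Euler
scheme with the difference quotients of `-ρ` as data. Testing with `θ` itself bounds `‖θⁿ‖` by
`‖θ⁰‖` plus the sum of the norms of the increments of `ρ`.
-/

section

variable {E : Type*} [SeminormedAddCommGroup E] [InnerProductSpace ℝ E]

theorem norm_le_norm_of_real_inner_sub_self_nonpos {x y : E} (h : ⟪x - y, x⟫ ≤ 0) : ‖x‖ ≤ ‖y‖ := by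
  rcases (norm_nonneg x).eq_or_lt' with hx | hx
  · exact hx ▸ norm_nonneg y
  · refine le_of_mul_le_mul_right ?_ hx
    calc ‖x‖ * ‖x‖ = ⟪x, x⟫ := (real_inner_self_eq_norm_mul_norm x).symm
      _ ≤ ⟪y, x⟫ := by rwa [inner_sub_left, sub_nonpos] at h
      _ ≤ ‖y‖ * ‖x‖ := real_inner_le_norm y x

/-- The implicit Euler equations with time step `Δt` and data `f¹, …, fⁿ`, tested against `V`.
`V` is the test space only: the values of `u` may leave it, so that the Galerkin solution in a
space also satisfies the equations tested against a subspace. -/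
def SatisfiesImplicitEuler (a : E →ₗ[ℝ] E →ₗ[ℝ] ℝ) (V : Submodule ℝ E) (Δt : ℝ) (n : ℕ)
    (f u : ℕ → E) : Prop :=
  ∀ j, 1 ≤ j → j ≤ n → ∀ v ∈ V,
    ⟪u j - u (j - 1), v⟫ + Δt * a (u j) v = Δt * ⟪f j, v⟫

namespace SatisfiesImplicitEuler

variable {a : E →ₗ[ℝ] E →ₗ[ℝ] ℝ} {V W : Submodule ℝ E} {Δt : ℝ} {m n : ℕ} {f g u w U : ℕ → E}

theorem mono_space (hu : SatisfiesImplicitEuler a W Δt n f u) (hVW : V ≤ W) :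
    SatisfiesImplicitEuler a V Δt n f u :=
  fun j hj hjn v hv => hu j hj hjn v (hVW hv)

theorem mono_steps (hu : SatisfiesImplicitEuler a V Δt n f u) (hmn : m ≤ n) :
    SatisfiesImplicitEuler a V Δt m f u :=
  fun j hj hjm => hu j hj (hjm.trans hmn)

theorem sub (hu : SatisfiesImplicitEuler a V Δt n f u) (hw : SatisfiesImplicitEuler a V Δt n g w) :
    SatisfiesImplicitEuler a V Δt n (f - g) (u - w) := by
  intro j hj hjn v hv
  have hu' := hu j hj hjn v hv
  have hw' := hw j hj hjn v hv
  simp only [Pi.sub_apply, map_sub, LinearMap.sub_apply, inner_sub_left] at hu' hw' ⊢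
  linarith

theorem ritz_projection (hΔt : Δt ≠ 0) (hu : SatisfiesImplicitEuler a V Δt n f u)
    (hRitz : ∀ j, 1 ≤ j → j ≤ n → ∀ v ∈ V, a (u j - w j) v = 0) :
    SatisfiesImplicitEuler a V Δt n
      (fun j => f j - Δt⁻¹ • ((u j - w j) - (u (j - 1) - w (j - 1)))) w := by
  intro j hj hjn v hv
  have hu' := hu j hj hjn v hv
  have ha : a (u j) v = a (w j) v := by
    simpa only [map_sub, LinearMap.sub_apply, sub_eq_zero] using hRitz j hj hjn v hv
  beta_reduce
  rw [inner_sub_left (f j), real_inner_smul_left, mul_sub, mul_inv_cancel_left₀ hΔt, ← hu', ha]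
  simp only [inner_sub_left]
  ring

theorem norm_le_norm_pred_add (hΔt : 0 ≤ Δt) (hu : SatisfiesImplicitEuler a V Δt n f u) {j : ℕ}
    (hj : 1 ≤ j) (hjn : j ≤ n) (hmem : u j ∈ V) (hnonneg : 0 ≤ a (u j) (u j)) :
    ‖u j‖ ≤ ‖u (j - 1)‖ + Δt * ‖f j‖ := by
  have energy : ⟪u j - (u (j - 1) + Δt • f j), u j⟫ ≤ 0 := by
    rw [← sub_sub, inner_sub_left, real_inner_smul_left, ← hu j hj hjn (u j) hmem,
      sub_add_cancel_left, neg_nonpos]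
    exact mul_nonneg hΔt hnonneg
  calc ‖u j‖ ≤ ‖u (j - 1) + Δt • f j‖ := norm_le_norm_of_real_inner_sub_self_nonpos energy
    _ ≤ ‖u (j - 1)‖ + ‖Δt • f j‖ := norm_add_le _ _
    _ = ‖u (j - 1)‖ + Δt * ‖f j‖ := by rw [norm_smul_of_nonneg hΔt]

theorem norm_le_norm_zero_add_sum (hΔt : 0 ≤ Δt) (hu : SatisfiesImplicitEuler a V Δt n f u)
    (hmem : ∀ j, 1 ≤ j → j ≤ n → u j ∈ V) (hnonneg : ∀ v ∈ V, 0 ≤ a v v) :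
    ‖u n‖ ≤ ‖u 0‖ + ∑ j ∈ Icc 1 n, Δt * ‖f j‖ := by
  induction n with
  | zero => simp
  | succ n ih =>
    have last_mem : u (n + 1) ∈ V := hmem _ n.succ_pos le_rfl
    calc ‖u (n + 1)‖ ≤ ‖u n‖ + Δt * ‖f (n + 1)‖ :=
          hu.norm_le_norm_pred_add hΔt n.succ_pos le_rfl last_mem (hnonneg _ last_mem)
      _ ≤ ‖u 0‖ + ∑ j ∈ Icc 1 n, Δt * ‖f j‖ + Δt * ‖f (n + 1)‖ := by
          gcongr
          exact ih (hu.mono_steps n.le_succ) fun j hj hjn => hmem j hj (hjn.trans n.le_succ)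
      _ = ‖u 0‖ + ∑ j ∈ Icc 1 (n + 1), Δt * ‖f j‖ := by
          rw [sum_Icc_succ_top n.succ_pos, add_assoc]

theorem norm_ritz_sub_le (hΔt : 0 < Δt) (hnonneg : ∀ v ∈ V, 0 ≤ a v v)
    (hu : SatisfiesImplicitEuler a V Δt n f u) (hU : SatisfiesImplicitEuler a V Δt n f U)
    (hwmem : ∀ j, 1 ≤ j → j ≤ n → w j ∈ V) (hUmem : ∀ j, 1 ≤ j → j ≤ n → U j ∈ V)
    (hRitz : ∀ j, 1 ≤ j → j ≤ n → ∀ v ∈ V, a (u j - w j) v = 0) :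
    ‖w n - U n‖ ≤ ‖w 0 - U 0‖
      + ∑ j ∈ Icc 1 n, ‖(u j - w j) - (u (j - 1) - w (j - 1))‖ := by
  have stability := ((hu.ritz_projection hΔt.ne' hRitz).sub hU).norm_le_norm_zero_add_sum hΔt.le
    (fun j hj hjn => V.sub_mem (hwmem j hj hjn) (hUmem j hj hjn)) hnonneg
  simpa only [Pi.sub_apply, sub_sub_cancel_left, norm_neg, norm_smul_of_nonneg (inv_pos.2 hΔt).le,
    mul_inv_cancel_left₀ hΔt.ne'] using stability

end SatisfiesImplicitEuler

theorem fine_multiscale_error_estimate_general {a : E →ₗ[ℝ] E →ₗ[ℝ] ℝ} {V : Submodule ℝ E}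
    (hnonneg : ∀ v ∈ V, 0 ≤ a v v) {n : ℕ} {u w U f : ℕ → E} {Δt : ℝ} (hΔt : 0 < Δt)
    (hwmem : ∀ j, 1 ≤ j → j ≤ n → w j ∈ V)
    (hRitz : ∀ j, 1 ≤ j → j ≤ n → ∀ v ∈ V, a (u j - w j) v = 0)
    (hUmem : ∀ j, 1 ≤ j → j ≤ n → U j ∈ V)
    (hu : SatisfiesImplicitEuler a V Δt n f u) (hU : SatisfiesImplicitEuler a V Δt n f U) :
    ‖u n - U n‖ ≤ ‖u n - w n‖ + ‖u 0 - U 0‖ + ‖u 0 - w 0‖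
      + ∑ j ∈ Icc 1 n, ‖(u j - w j) - (u (j - 1) - w (j - 1))‖ := by
  have split_final : ‖u n - U n‖ ≤ ‖u n - w n‖ + ‖w n - U n‖ :=
    norm_sub_le_norm_sub_add_norm_sub _ _ _
  have split_initial : ‖w 0 - U 0‖ ≤ ‖u 0 - U 0‖ + ‖u 0 - w 0‖ := by
    simpa only [sub_sub_sub_cancel_left] using norm_sub_le (u 0 - U 0) (u 0 - w 0)
  have projected_error := hu.norm_ritz_sub_le hΔt hnonneg hU hwmem hUmem hRitz
  linarith

end

/-- Error between the fine-scale and the multiscale implicit Euler solutions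
(explicit form of the `e₂` estimate), with `ρ^j = u_h^j − R_H u_h^j`:
`‖u_hⁿ − u_Hⁿ‖ ≤ ‖ρⁿ‖ + ‖u_h⁰ − u_H⁰‖ + ‖ρ⁰‖ + Σ_{j=1}^{n} (‖ρ^j‖ + ‖ρ^{j−1}‖)`. -/
theorem fine_multiscale_error_estimate
    {E : Type*} [NormedAddCommGroup E] [InnerProductSpace ℝ E]
    (a : E →ₗ[ℝ] E →ₗ[ℝ] ℝ)
    (hsymm : ∀ u v : E, a u v = a v u)
    (hpsd : ∀ v : E, 0 ≤ a v v)
    (Vms Vh : Submodule ℝ E) (hsub : Vms ≤ Vh)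
    (RH : E →ₗ[ℝ] E) (hRHmem : ∀ u : E, RH u ∈ Vms)
    (hRitz : ∀ u : E, ∀ v ∈ Vms, a (u - RH u) v = 0)
    (n : ℕ) (uh uH f : ℕ → E) (Δt : ℝ) (hΔt : 0 < Δt)
    (huhmem : ∀ j ≤ n, uh j ∈ Vh)
    (huHmem : ∀ j ≤ n, uH j ∈ Vms)
    (hschemeh : ∀ j, 1 ≤ j → j ≤ n → ∀ v ∈ Vh,
      ⟪uh j - uh (j - 1), v⟫ + Δt * a (uh j) v = Δt * ⟪f j, v⟫)
    (hschemeH : ∀ j, 1 ≤ j → j ≤ n → ∀ v ∈ Vms,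
      ⟪uH j - uH (j - 1), v⟫ + Δt * a (uH j) v = Δt * ⟪f j, v⟫) :
    ‖uh n - uH n‖
      ≤ ‖uh n - RH (uh n)‖ + ‖uh 0 - uH 0‖ + ‖uh 0 - RH (uh 0)‖
        + ∑ j ∈ Icc 1 n, (‖uh j - RH (uh j)‖ + ‖uh (j - 1) - RH (uh (j - 1))‖) := by
  have estimate := fine_multiscale_error_estimate_general (w := fun j => RH (uh j))
    (fun v _ => hpsd v) hΔt (fun _ _ _ => hRHmem _) (fun _ _ _ => hRitz _) (fun j _ => huHmem j)
    (SatisfiesImplicitEuler.mono_space hschemeh hsub) hschemeH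
  exact estimate.trans (by gcongr; exact norm_sub_le _ _)
end
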